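/- Let ℓ ≥ 1 be an integer and suppose Φ is ψ-irreducible. Then Φ is ℓ-transient if there exist a set A ∈ B+(X), constants d ∈ (0,∞) and b ∈ (0,1), and nonnegative functions V and W with V(x) ≥ 1 for all x ∈ X, W(x) ≥ 1 for x ∈ A, and W(x) ≤ 1 for x ∈ A^c, satisfying for all x ∈ X: PV(x) ≤ (V(x) − ℓ V^{1−1/ℓ}(x)) 1_{A^c}(x) + d 1_A(x), and PW(x) ≤ W(x) 1_{A^c}(x) + b 1_A(x). -/

import Mathlib

/-!
The drift of `W` makes the return to `A` uniformly defective: `P_x(τ_A < ∞) ≤ b < 1` on `A`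
(`retE_one_le_of_drift`). For the drift of `V`, put `v = V^(1/ℓ)`. Bernoulli's inequality gives
`(PV)^(1/ℓ) ≤ v - 1` off `A` (`rpow_add_one_le_of_drift`), and Minkowski's inequality in
`L^ℓ(P(x, ·))` (`lintegral_rpow_add_pow_le`) then shows that `(v(x) + c)^ℓ` is a space-time
supersolution off `A`. Hence `E_x[τ_A^ℓ; τ_A < ∞]` is bounded on `A` and at most `V(x)` off `A`
(`retE_pow_le_of_drift`).

These two facts bound `∑ n^ℓ P^n(x, A)` (`exists_green_bound`). The function
`h(c, x) = E_x[s (c + τ_A)^ℓ + β; τ_A < ∞]`, where `c` is the time already elapsed, satisfies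
`P(1_A (c+1)^ℓ + h(c+1, ·)) ≤ h(c, ·)` as soon as `c^ℓ + h(c, y) ≤ s c^ℓ + β` on `A`. Splitting
`(c + n)^ℓ ≤ δ c^ℓ + C n^ℓ` with `δ b < 1` reduces this to two scalar equations for `s` and `β`,
and iteration of the supersolution inequality gives the bound.

Finally, the sets of points of `A ∪ {V ≤ j}` from which `A` is reached at time `k + 1` with
probability at least `1/(j+1)` inherit the bound from `A` (`mul_iterP_le`). By irreducibility
they cover `{V < ∞}`, and the complement of that set is `ψ`-null (`measure_V_eq_top`).
-/

open MeasureTheory ProbabilityTheory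
open scoped ENNReal NNReal Classical

namespace MarkovTransience

variable {X : Type*} [MeasurableSpace X]

/-- `iterP P n x A` is the `n`-step transition probability `P^n(x, A)`. -/
noncomputable def iterP (P : Kernel X X) : ℕ → X → Set X → ℝ≥0∞
  | 0 => fun x A => A.indicator (fun _ => 1) x
  | n + 1 => fun x A => ∫⁻ y, iterP P n y A ∂(P x)

/-- `retF P A n x` is `F^n(x, A) = P_x(τ_A = n)`, the probability that the first
return to `A` happens at time `n`. -/
noncomputable def retF (P : Kernel X X) (A : Set X) : ℕ → X → ℝ≥0∞
  | 0 => fun _ => 0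
  | 1 => fun x => P x A
  | n + 2 => fun x => ∫⁻ y in Aᶜ, retF P A (n + 1) y ∂(P x)

/-- `retL P A x = L(x, A) = P_x(τ_A < ∞)`. -/
noncomputable def retL (P : Kernel X X) (A : Set X) (x : X) : ℝ≥0∞ :=
  ∑' n, retF P A n x

/-- `retE P A r x = E_x[r(τ_A) 1_{τ_A < ∞}]`. -/
noncomputable def retE (P : Kernel X X) (A : Set X) (r : ℕ → ℝ≥0∞) (x : X) : ℝ≥0∞ :=
  ∑' n, r n * retF P A n x

/-- `hitE P A r x = E_x[r(σ_A) 1_{σ_A < ∞}]`, `σ_A` the first hitting time. -/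
noncomputable def hitE (P : Kernel X X) (A : Set X) (r : ℕ → ℝ≥0∞) (x : X) : ℝ≥0∞ :=
  if x ∈ A then r 0 else retE P A r x

/-- `act P W x = PW(x) = ∫ W(y) P(x, dy)`. -/
noncomputable def act (P : Kernel X X) (W : X → ℝ≥0∞) (x : X) : ℝ≥0∞ :=
  ∫⁻ y, W y ∂(P x)

/-- `ψ`-irreducibility: `ψ` is a nontrivial σ-finite measure such that every set of
positive `ψ`-measure is reached with positive probability from every starting point. -/
def IsIrreducibility (P : Kernel X X) (ψ : Measure X) : Prop :=
  ψ ≠ 0 ∧ SigmaFinite ψ ∧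
    ∀ A : Set X, MeasurableSet A → 0 < ψ A → ∀ x, 0 < ∑' n, iterP P (n + 1) x A

/-- `ψ` is a maximal irreducibility measure for `P`. -/
def IsMaxIrreducibility (P : Kernel X X) (ψ : Measure X) : Prop :=
  IsIrreducibility P ψ ∧ ∀ ψ' : Measure X, IsIrreducibility P ψ' → ψ' ≪ ψ

/-- `A ∈ B⁺(X)`: a measurable set of positive `ψ`-measure. -/
def InBPlus (ψ : Measure X) (A : Set X) : Prop :=
  MeasurableSet A ∧ 0 < ψ A

/-- A petite set. -/
def PetiteSet (P : Kernel X X) (A : Set X) : Prop :=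
  ∃ (a : ℕ → ℝ≥0∞) (ν : Measure X), (∑' n, a n) = 1 ∧ ν ≠ 0 ∧
    ∀ x ∈ A, ∀ B : Set X, MeasurableSet B → ν B ≤ ∑' n, a n * iterP P (n + 1) x B

/-- The chain is transient. -/
def Transient (P : Kernel X X) (ψ : Measure X) : Prop :=
  IsMaxIrreducibility P ψ ∧
    ∃ A : ℕ → Set X, (⋃ i, A i) = Set.univ ∧
      ∀ i, InBPlus ψ (A i) ∧ (⨆ x ∈ A i, ∑' n, iterP P (n + 1) x (A i)) < ⊤

/-- A uniformly geometric transient set. -/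
def UnifGeomTransientSet (P : Kernel X X) (A : Set X) : Prop :=
  ∃ κ : ℝ≥0, 1 < κ ∧ (⨆ x ∈ A, ∑' n, (κ : ℝ≥0∞) ^ (n + 1) * iterP P (n + 1) x A) < ⊤

/-- The chain is geometrically transient. -/
def GeomTransient (P : Kernel X X) (ψ : Measure X) : Prop :=
  IsMaxIrreducibility P ψ ∧
    ∃ (D : Set X) (A : ℕ → Set X), ψ D = 0 ∧ D ∪ (⋃ i, A i) = Set.univ ∧
      ∀ i, InBPlus ψ (A i) ∧ UnifGeomTransientSet P (A i)

/-- A uniformly `ℓ`-transient set. -/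
def UnifAlgTransientSet (P : Kernel X X) (ℓ : ℕ) (A : Set X) : Prop :=
  (⨆ x ∈ A, ∑' n, ((n + 1 : ℕ) : ℝ≥0∞) ^ ℓ * iterP P (n + 1) x A) < ⊤

/-- The chain is algebraically (`ℓ`-)transient. -/
def AlgTransient (P : Kernel X X) (ψ : Measure X) (ℓ : ℕ) : Prop :=
  IsMaxIrreducibility P ψ ∧
    ∃ (D : Set X) (A : ℕ → Set X), ψ D = 0 ∧ D ∪ (⋃ i, A i) = Set.univ ∧
      ∀ i, InBPlus ψ (A i) ∧ UnifAlgTransientSet P ℓ (A i)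

/-- `lifeDist P x n = P_x(τ = n)` where `τ = sup{n : Φ_n ∈ X}` is the lifetime of the
(sub-stochastic) chain, so that `P_x(τ = n) = P^n(x, X) - P^{n+1}(x, X)`. -/
noncomputable def lifeDist (P : Kernel X X) (x : X) (n : ℕ) : ℝ≥0∞ :=
  iterP P n x Set.univ - iterP P (n + 1) x Set.univ

/-- `lifeE P r x = E_x[r(τ)]` for the lifetime `τ` (on the event `τ < ∞`). -/
noncomputable def lifeE (P : Kernel X X) (r : ℕ → ℝ≥0∞) (x : X) : ℝ≥0∞ :=
  ∑' n, r n * lifeDist P x n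

/-- The family `Λ` of normalized increasing submultiplicative rate functions. -/
def InLambda (r : ℕ → ℝ≥0) : Prop :=
  Monotone r ∧ r 0 = 1 ∧ (∀ n, 1 ≤ r n) ∧ ∀ m n, r (m + n) ≤ r m * r n

/-! ### Measurability and one-step recursions -/

lemma measurable_iterP (P : Kernel X X) {A : Set X} (hA : MeasurableSet A) (n : ℕ) :
    Measurable fun x => iterP P n x A := by
  induction n with
  | zero => exact measurable_const.indicator hA
  | succ n ih => exact ih.lintegral_kernel

lemma measurable_retF (P : Kernel X X) {A : Set X} (hA : MeasurableSet A) :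
    ∀ n, Measurable (retF P A n)
  | 0 => measurable_const
  | 1 => P.measurable_coe hA
  | n + 2 => by
    simp only [retF, ← lintegral_indicator hA.compl]
    exact ((measurable_retF P hA (n + 1)).indicator hA.compl).lintegral_kernel

/-- First-step decomposition of `E_x[r(τ_A); τ_A < ∞]`. -/
lemma retE_step (P : Kernel X X) {A : Set X} (hA : MeasurableSet A) (r : ℕ → ℝ≥0∞) (x : X) :
    retE P A r x = r 1 * P x A + ∫⁻ y in Aᶜ, retE P A (fun n => r (n + 1)) y ∂(P x) := by
  unfold retE
  rw [tsum_eq_zero_add' ENNReal.summable, tsum_eq_zero_add' ENNReal.summable,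
    lintegral_tsum fun n => ((measurable_retF P hA n).const_mul _).aemeasurable,
    tsum_eq_zero_add' (f := fun n => ∫⁻ y in Aᶜ, r (n + 1) * retF P A n y ∂(P x))
      ENNReal.summable]
  simp only [retF, mul_zero, zero_add, lintegral_zero]
  congr 1
  refine tsum_congr fun n => ?_
  rw [lintegral_const_mul _ (measurable_retF P hA (n + 1))]

/-- Comparison principle: a space-time supersolution off `A` dominates the expected
terminal reward `r` collected at the first return to `A`. -/
lemma retE_le_of_super (P : Kernel X X) {A : Set X} (hA : MeasurableSet A) (r : ℕ → ℝ≥0∞)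
    (g : ℕ → X → ℝ≥0∞)
    (hg : ∀ c, ∀ x ∉ A, r (c + 1) * P x A + ∫⁻ y in Aᶜ, g (c + 1) y ∂(P x) ≤ g c x)
    (c : ℕ) {x : X} (hx : x ∉ A) : retE P A (fun n => r (c + n)) x ≤ g c x := by
  unfold retE
  rw [tsum_eq_zero_add' ENNReal.summable]
  simp only [retF, mul_zero, zero_add]
  refine ENNReal.tsum_le_of_sum_range_le fun N => ?_
  induction N generalizing c x with
  | zero => simp
  | succ N ih =>
    rw [Finset.sum_range_succ', add_comm]
    refine le_trans (add_le_add (by simp [retF]) ?_) (hg c x hx)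
    calc ∑ n ∈ Finset.range N, r (c + (n + 1 + 1)) * retF P A (n + 1 + 1) x
        = ∫⁻ y in Aᶜ, ∑ n ∈ Finset.range N, r (c + 1 + (n + 1)) * retF P A (n + 1) y ∂(P x) := by
          rw [lintegral_finsetSum _ fun n _ => (measurable_retF P hA (n + 1)).const_mul _]
          refine Finset.sum_congr rfl fun n _ => ?_
          rw [lintegral_const_mul _ (measurable_retF P hA (n + 1)), retF]
          congr 2
          ring
      _ ≤ _ := setLIntegral_mono' hA.compl fun y hy => ih (c + 1) hy

/-- Green-type comparison principle: a space-time supersolution `h` for the reward `r`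
paid at each visit to `A` dominates the total expected reward. -/
lemma tsum_iterP_le_of_super (P : Kernel X X) {A : Set X} (hA : MeasurableSet A)
    (r : ℕ → ℝ≥0∞) (h : ℕ → X → ℝ≥0∞)
    (hh : ∀ c x, ∫⁻ y, (A.indicator (fun _ => r (c + 1)) y + h (c + 1) y) ∂(P x) ≤ h c x)
    (c : ℕ) (x : X) : ∑' n, r (c + (n + 1)) * iterP P (n + 1) x A ≤ h c x := by
  refine ENNReal.tsum_le_of_sum_range_le fun N => ?_
  induction N generalizing c x with
  | zero => simp
  | succ N ih =>
    refine le_trans ?_ (hh c x)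
    rw [lintegral_add_left (measurable_const.indicator hA), lintegral_indicator_const hA,
      Finset.sum_range_succ', add_comm]
    refine add_le_add (le_of_eq ?_) ?_
    · have : ∫⁻ y, A.indicator (fun _ => (1 : ℝ≥0∞)) y ∂(P x) = P x A := by
        rw [lintegral_indicator_const hA, one_mul]
      simp only [iterP, zero_add, this]
    calc ∑ n ∈ Finset.range N, r (c + (n + 1 + 1)) * iterP P (n + 1 + 1) x A
        = ∫⁻ y, ∑ n ∈ Finset.range N, r (c + 1 + (n + 1)) * iterP P (n + 1) y A ∂(P x) := by
          rw [lintegral_finsetSum _ fun n _ => (measurable_iterP P hA (n + 1)).const_mul _]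
          refine Finset.sum_congr rfl fun n _ => ?_
          rw [lintegral_const_mul _ (measurable_iterP P hA (n + 1)), iterP]
          congr 2
          ring
      _ ≤ _ := lintegral_mono fun y => ih (c + 1) y

lemma const_mul_add_setLIntegral_le (μ : Measure X) {A : Set X} (hA : MeasurableSet A)
    (a : ℝ≥0∞) (f : X → ℝ≥0∞) (hf : ∀ y ∈ A, a ≤ f y) :
    a * μ A + ∫⁻ y in Aᶜ, f y ∂μ ≤ ∫⁻ y, f y ∂μ := by
  calc a * μ A + ∫⁻ y in Aᶜ, f y ∂μ = ∫⁻ _ in A, a ∂μ + ∫⁻ y in Aᶜ, f y ∂μ := by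
        rw [setLIntegral_const]
    _ ≤ ∫⁻ y in A, f y ∂μ + ∫⁻ y in Aᶜ, f y ∂μ := by
        gcongr ?_ + _
        exact setLIntegral_mono' hA hf
    _ = ∫⁻ y, f y ∂μ := lintegral_add_compl f hA

/-! ### Elementary inequalities -/

lemma exists_geom_const {q : ℝ≥0∞} (hq : q < 1) : ∃ s : ℝ≥0∞, s ≠ ⊤ ∧ q * s + 1 = s := by
  refine ⟨∑' n, q ^ n, ?_, ?_⟩
  · rw [ENNReal.tsum_geometric]
    exact ENNReal.inv_ne_top.2 (tsub_pos_of_lt hq).ne'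
  · conv_rhs => rw [tsum_eq_zero_add' ENNReal.summable]
    rw [← ENNReal.tsum_mul_left, pow_zero, add_comm]
    congr 1
    exact tsum_congr fun n => (pow_succ' q n).symm

/-- `(c + n)^ℓ ≤ δ c^ℓ + C n^ℓ` with `δ > 1` so close to `1` that `δ b` stays below `1`. -/
lemma exists_split_const {b : ℝ≥0∞} (hb1 : b < 1) (ℓ : ℕ) :
    ∃ δ C : ℝ≥0∞, C ≠ ⊤ ∧ δ * b < 1 ∧
      ∀ c n : ℕ, ((c + n : ℕ) : ℝ≥0∞) ^ ℓ ≤ δ * (c : ℝ≥0∞) ^ ℓ + C * (n : ℝ≥0∞) ^ ℓ := by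
  have hlim : Filter.Tendsto (fun K : ℕ => (1 + ((K : ℝ≥0∞))⁻¹) ^ ℓ * b) Filter.atTop
      (nhds ((1 + 0) ^ ℓ * b)) :=
    ENNReal.Tendsto.mul_const
      (((ENNReal.continuous_pow ℓ).tendsto _).comp
        (tendsto_const_nhds.add ENNReal.tendsto_inv_nat_nhds_zero))
      (Or.inr hb1.ne_top)
  rw [add_zero, one_pow, one_mul] at hlim
  obtain ⟨K, hK, hK0⟩ := ((hlim.eventually (gt_mem_nhds hb1)).and
    (Filter.eventually_gt_atTop 0)).exists
  have hK0' : (K : ℝ≥0∞) ≠ 0 := by exact_mod_cast hK0.ne'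
  refine ⟨(1 + (K : ℝ≥0∞)⁻¹) ^ ℓ, ((K + 1 : ℕ) : ℝ≥0∞) ^ ℓ, by finiteness, hK, fun c n => ?_⟩
  rcases le_total (K * n) c with h | h
  · refine le_trans ?_ le_self_add
    rw [← mul_pow]
    gcongr
    have : (n : ℝ≥0∞) ≤ (K : ℝ≥0∞)⁻¹ * c := by
      rw [mul_comm, ← div_eq_mul_inv, ENNReal.le_div_iff_mul_le (Or.inl hK0') (Or.inl (by simp))]
      exact_mod_cast (mul_comm n K).trans_le h
    push_cast
    rw [add_mul, one_mul]
    gcongr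
  · refine le_trans ?_ le_add_self
    rw [← mul_pow]
    gcongr
    exact_mod_cast (by linarith : c + n ≤ (K + 1) * n)

lemma add_one_pow_le (u : ℝ≥0∞) (m : ℕ) :
    (u + 1) ^ (m + 1) ≤ u ^ (m + 1) + ((m + 1 : ℕ) : ℝ≥0∞) * (u + 1) ^ m := by
  induction m with
  | zero => simp
  | succ m ih =>
    calc (u + 1) ^ (m + 1 + 1) = (u + 1) ^ (m + 1) * u + (u + 1) ^ (m + 1) := by ring
      _ ≤ (u ^ (m + 1) + ((m + 1 : ℕ) : ℝ≥0∞) * (u + 1) ^ m) * u + (u + 1) ^ (m + 1) := by gcongr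
      _ = u ^ (m + 1 + 1) + ((m + 1 : ℕ) : ℝ≥0∞) * ((u + 1) ^ m * u) + (u + 1) ^ (m + 1) := by
          ring
      _ ≤ u ^ (m + 1 + 1) + ((m + 1 : ℕ) : ℝ≥0∞) * ((u + 1) ^ m * (u + 1))
            + (u + 1) ^ (m + 1) := by
          gcongr
          exact le_self_add
      _ = _ := by push_cast; ring

/-- The polynomial drift inequality, read for `V^(1/ℓ)`, is a decrease by at least `1`. -/
lemma rpow_add_one_le_of_drift {ℓ : ℕ} (hℓ : 1 ≤ ℓ) {p w : ℝ≥0∞} (hw : 1 ≤ w)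
    (h : p + (ℓ : ℝ≥0∞) * w ^ ((1 : ℝ) - 1 / ℓ) ≤ w) :
    p ^ ((1 : ℝ) / ℓ) + 1 ≤ w ^ ((1 : ℝ) / ℓ) := by
  obtain ⟨m, rfl⟩ : ∃ m, ℓ = m + 1 := ⟨ℓ - 1, by omega⟩
  have hm : ((m + 1 : ℕ) : ℝ) ≠ 0 := by positivity
  have hpos : (0 : ℝ) < 1 / ((m + 1 : ℕ) : ℝ) := by positivity
  rcases eq_or_ne w ⊤ with rfl | hwt
  · rw [ENNReal.top_rpow_of_pos hpos]
    exact le_top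
  set v := w ^ ((1 : ℝ) / (m + 1 : ℕ)) with hv
  have hvt : v ≠ ⊤ := ENNReal.rpow_ne_top_of_nonneg hpos.le hwt
  have hv1 : 1 ≤ v := ENNReal.one_le_rpow hw hpos
  have hw_eq : w = v ^ (m + 1) := by
    rw [hv, ← ENNReal.rpow_natCast, ← ENNReal.rpow_mul, one_div_mul_cancel hm, ENNReal.rpow_one]
  have hw_eq' : w ^ ((1 : ℝ) - 1 / (m + 1 : ℕ)) = v ^ m := by
    rw [hv, ← ENNReal.rpow_natCast, ← ENNReal.rpow_mul]
    congr 1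
    field_simp
    push_cast
    ring
  obtain ⟨u, hu⟩ : ∃ u, v = u + 1 := ⟨v - 1, (tsub_add_cancel_of_le hv1).symm⟩
  have key : p ≤ u ^ (m + 1) := by
    rw [hw_eq', hw_eq] at h
    have hfin : ((m + 1 : ℕ) : ℝ≥0∞) * v ^ m ≠ ⊤ := by finiteness
    refine (ENNReal.add_le_add_iff_right hfin).1 (h.trans ?_)
    rw [hu]
    exact add_one_pow_le u m
  rw [hu]
  gcongr
  calc p ^ ((1 : ℝ) / (m + 1 : ℕ)) ≤ (u ^ (m + 1)) ^ ((1 : ℝ) / (m + 1 : ℕ)) := by gcongr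
    _ = u := by
      rw [← ENNReal.rpow_natCast, ← ENNReal.rpow_mul, mul_one_div_cancel hm, ENNReal.rpow_one]

/-- Minkowski's inequality in `L^ℓ` of a sub-probability measure. -/
lemma lintegral_rpow_add_pow_le {ℓ : ℕ} (hℓ : 1 ≤ ℓ) (μ : Measure X) (hμ : μ Set.univ ≤ 1)
    {V : X → ℝ≥0∞} (hV : Measurable V) (c : ℝ≥0∞) :
    ∫⁻ y, (V y ^ ((1 : ℝ) / ℓ) + c) ^ ℓ ∂μ ≤ ((∫⁻ y, V y ∂μ) ^ ((1 : ℝ) / ℓ) + c) ^ ℓ := by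
  have hl : (ℓ : ℝ) ≠ 0 := by positivity
  have hl0 : (0 : ℝ) < ℓ := by positivity
  have h := ENNReal.lintegral_Lp_add_le (μ := μ) (p := ℓ) (f := fun y => V y ^ ((1 : ℝ) / ℓ))
    (g := fun _ => c) (hV.pow_const _).aemeasurable aemeasurable_const (by exact_mod_cast hℓ)
  have hroot : ∀ a : ℝ≥0∞, (a ^ ((1 : ℝ) / ℓ)) ^ ℓ = a := fun a => by
    rw [← ENNReal.rpow_natCast, ← ENNReal.rpow_mul, one_div_mul_cancel hl, ENNReal.rpow_one]
  have hroot' : ∀ a : ℝ≥0∞, (a ^ ℓ) ^ ((1 : ℝ) / ℓ) = a := fun a => by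
    rw [← ENNReal.rpow_natCast, ← ENNReal.rpow_mul, mul_one_div_cancel hl, ENNReal.rpow_one]
  simp only [Pi.add_apply, ENNReal.rpow_natCast, hroot, lintegral_const] at h
  have h' := pow_le_pow_left' h ℓ
  rw [hroot] at h'
  refine h'.trans ?_
  gcongr
  calc (c ^ ℓ * μ Set.univ) ^ ((1 : ℝ) / ℓ) ≤ (c ^ ℓ * 1) ^ ((1 : ℝ) / ℓ) := by gcongr
    _ = c := by rw [mul_one, hroot']

/-! ### Polynomial moments of visits to a set with uniformly defective return -/

lemma retE_const_mul_add (P : Kernel X X) (A : Set X) (s t : ℝ≥0∞) (f g : ℕ → ℝ≥0∞) (x : X) :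
    retE P A (fun n => s * f n + t * g n) x = s * retE P A f x + t * retE P A g x := by
  unfold retE
  rw [← ENNReal.tsum_mul_left, ← ENNReal.tsum_mul_left, ← ENNReal.tsum_add]
  exact tsum_congr fun n => by ring

/-- If from `A` the return probability is at most `b < 1` and the `ℓ`-th moment of a finite
return time is at most `M`, then the `n^ℓ`-weighted Green function of `A` is controlled at
every starting point by the first return to `A`. -/
lemma exists_green_bound (P : Kernel X X) {A : Set X} (hA : MeasurableSet A) (ℓ : ℕ)
    {b M : ℝ≥0∞} (hb1 : b < 1) (hM : M ≠ ⊤)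
    (hL : ∀ x ∈ A, retE P A (fun _ => 1) x ≤ b)
    (hR : ∀ x ∈ A, retE P A (fun n => (n : ℝ≥0∞) ^ ℓ) x ≤ M) :
    ∃ s β : ℝ≥0∞, s ≠ ⊤ ∧ β ≠ ⊤ ∧ ∀ x,
      ∑' n, ((n + 1 : ℕ) : ℝ≥0∞) ^ ℓ * iterP P (n + 1) x A ≤
        s * retE P A (fun n => (n : ℝ≥0∞) ^ ℓ) x + β * retE P A (fun _ => 1) x := by
  obtain ⟨δ, C, hC, hδ, hsplit⟩ := exists_split_const hb1 ℓ
  obtain ⟨s, hs, hs_eq⟩ := exists_geom_const hδ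
  obtain ⟨t, ht, ht_eq⟩ := exists_geom_const hb1
  -- `s` and `β` solve `δ b s + 1 = s` and `b β + s C M = β`: after a visit to `A` at time `c`
  -- the expected remaining reward is then at most `(s - 1) c ^ ℓ + β`.
  set β := t * (s * C * M) with hβ
  have hβ_eq : b * β + s * C * M = β := by
    calc b * β + s * C * M = (b * t + 1) * (s * C * M) := by rw [hβ]; ring
      _ = β := by rw [ht_eq]
  refine ⟨s, β, hs, by finiteness, fun x => ?_⟩
  let h : ℕ → X → ℝ≥0∞ := fun c =>
    retE P A fun n => s * ((c + n : ℕ) : ℝ≥0∞) ^ ℓ + β * 1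
  have hvisit : ∀ c : ℕ, ∀ y ∈ A, (c : ℝ≥0∞) ^ ℓ + h c y ≤ s * (c : ℝ≥0∞) ^ ℓ + β * 1 := by
    intro c y hy
    have h1 : h c y ≤ s * δ * (c : ℝ≥0∞) ^ ℓ * b + s * C * M + β * b := by
      calc h c y ≤ retE P A (fun n => s * (δ * (c : ℝ≥0∞) ^ ℓ * 1 + C * (n : ℝ≥0∞) ^ ℓ)
              + β * 1) y := by
            unfold h retE
            gcongr with n
            dsimp only
            gcongr
            simpa using hsplit c n
        _ = s * (δ * (c : ℝ≥0∞) ^ ℓ * retE P A (fun _ => 1) y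
              + C * retE P A (fun n => (n : ℝ≥0∞) ^ ℓ) y) + β * retE P A (fun _ => 1) y := by
            rw [retE_const_mul_add P A s β
              (fun n => δ * (c : ℝ≥0∞) ^ ℓ * 1 + C * (n : ℝ≥0∞) ^ ℓ) (fun _ => 1),
              retE_const_mul_add P A _ C (fun _ => 1) (fun n => (n : ℝ≥0∞) ^ ℓ)]
        _ ≤ s * (δ * (c : ℝ≥0∞) ^ ℓ * b + C * M) + β * b := by
            gcongr
            exacts [hL y hy, hR y hy, hL y hy]
        _ = _ := by ring
    calc (c : ℝ≥0∞) ^ ℓ + h c y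
        ≤ (c : ℝ≥0∞) ^ ℓ + (s * δ * (c : ℝ≥0∞) ^ ℓ * b + s * C * M + β * b) := by gcongr
      _ = (δ * b * s + 1) * (c : ℝ≥0∞) ^ ℓ + (b * β + s * C * M) := by ring
      _ = _ := by rw [hs_eq, hβ_eq, mul_one]
  have hsuper : ∀ c x, ∫⁻ y, (A.indicator (fun _ => ((c + 1 : ℕ) : ℝ≥0∞) ^ ℓ) y + h (c + 1) y)
      ∂(P x) ≤ h c x := by
    intro c x
    rw [show h c x = _ from retE_step P hA _ x, ← lintegral_add_compl _ hA]
    refine add_le_add ?_ (le_of_eq ?_)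
    · rw [← setLIntegral_const]
      refine setLIntegral_mono' hA fun y hy => ?_
      rw [Set.indicator_of_mem hy]
      exact hvisit (c + 1) y hy
    · refine setLIntegral_congr_fun hA.compl fun y hy => ?_
      simp only [Set.indicator_of_notMem hy, zero_add, h]
      refine congrArg (fun r => retE P A r y) (funext fun n => ?_)
      rw [show c + 1 + n = c + (n + 1) by ring]
  have := tsum_iterP_le_of_super P hA (fun n => (n : ℝ≥0∞) ^ ℓ) h hsuper 0 x
  simp only [h, zero_add] at this
  rwa [retE_const_mul_add P A s β (fun n => (n : ℝ≥0∞) ^ ℓ) (fun _ => 1)] at this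

/-- Sets from which `A` is reached at time `k` with probability at least `ε` inherit the
weighted Green bounds of `A`. -/
lemma mul_iterP_le (P : Kernel X X) {A B : Set X} (hB : MeasurableSet B)
    {ε : ℝ≥0∞} {k : ℕ} (hBε : ∀ y ∈ B, ε ≤ iterP P k y A) (n : ℕ) (x : X) :
    ε * iterP P n x B ≤ iterP P (n + k) x A := by
  induction n generalizing x with
  | zero =>
    by_cases hx : x ∈ B
    · simpa [iterP, hx] using hBε x hx
    · simp [iterP, hx]
  | succ n ih =>
    rw [show n + 1 + k = n + k + 1 by ring, iterP, iterP,
      ← lintegral_const_mul _ (measurable_iterP P hB n)]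
    exact lintegral_mono fun y => ih y

/-! ### Consequences of the two drift conditions -/

lemma retE_one_le_of_drift (P : Kernel X X) {A : Set X} (hA : MeasurableSet A)
    {b : ℝ≥0∞} {W : X → ℝ≥0∞} (hWA : ∀ x ∈ A, 1 ≤ W x)
    (hWdriftA : ∀ x ∈ A, act P W x ≤ b) (hWdriftAc : ∀ x ∉ A, act P W x ≤ W x) :
    (∀ x ∈ A, retE P A (fun _ => 1) x ≤ b) ∧ ∀ x ∉ A, retE P A (fun _ => 1) x ≤ W x := by
  have hstep : ∀ x, 1 * P x A + ∫⁻ y in Aᶜ, W y ∂(P x) ≤ act P W x := fun x =>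
    const_mul_add_setLIntegral_le _ hA 1 W hWA
  have hoff : ∀ x ∉ A, retE P A (fun _ => 1) x ≤ W x := fun x hx =>
    retE_le_of_super P hA (fun _ => 1) (fun _ => W)
      (fun _ x hx => (hstep x).trans (hWdriftAc x hx)) 0 hx
  refine ⟨fun x hx => ?_, hoff⟩
  rw [retE_step P hA]
  refine le_trans ?_ ((hstep x).trans (hWdriftA x hx))
  gcongr ?_ + ?_
  · exact le_rfl
  · exact setLIntegral_mono' hA.compl hoff

/-- The functions `(V^(1/ℓ) + c)^ℓ` form a space-time supersolution off `A`, and therefore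
bound the `ℓ`-th moment of the return time. -/
lemma retE_pow_le_of_drift (P : Kernel X X) (hP : ∀ x, P x Set.univ ≤ 1) {A : Set X}
    (hA : MeasurableSet A) {ℓ : ℕ} (hℓ : 1 ≤ ℓ) {d : ℝ≥0∞} {V : X → ℝ≥0∞} (hVm : Measurable V)
    (hV1 : ∀ x, 1 ≤ V x) (hVdriftA : ∀ x ∈ A, act P V x ≤ d)
    (hVdriftAc : ∀ x ∉ A, act P V x + (ℓ : ℝ≥0∞) * V x ^ ((1 : ℝ) - 1 / ℓ) ≤ V x) :
    (∀ x ∈ A, retE P A (fun n => (n : ℝ≥0∞) ^ ℓ) x ≤ (d ^ ((1 : ℝ) / ℓ) + 1) ^ ℓ) ∧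
      ∀ x ∉ A, retE P A (fun n => (n : ℝ≥0∞) ^ ℓ) x ≤ V x := by
  have hl : (ℓ : ℝ) ≠ 0 := by positivity
  have hstep : ∀ (c : ℕ) (x : X), ((c + 1 : ℕ) : ℝ≥0∞) ^ ℓ * P x A
      + ∫⁻ y in Aᶜ, (V y ^ ((1 : ℝ) / ℓ) + ((c + 1 : ℕ) : ℝ≥0∞)) ^ ℓ ∂(P x)
      ≤ (act P V x ^ ((1 : ℝ) / ℓ) + ((c + 1 : ℕ) : ℝ≥0∞)) ^ ℓ := fun c x =>
    (const_mul_add_setLIntegral_le _ hA _ _ fun y _ => by gcongr; exact le_add_self).trans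
      (lintegral_rpow_add_pow_le hℓ (P x) (hP x) hVm _)
  have hoff : ∀ c : ℕ, ∀ x ∉ A, retE P A (fun n => ((c + n : ℕ) : ℝ≥0∞) ^ ℓ) x
      ≤ (V x ^ ((1 : ℝ) / ℓ) + c) ^ ℓ := fun c x hx =>
    retE_le_of_super P hA (fun n => (n : ℝ≥0∞) ^ ℓ)
      (fun c x => (V x ^ ((1 : ℝ) / ℓ) + c) ^ ℓ) (fun c x hx => by
        refine (hstep c x).trans ?_
        have := rpow_add_one_le_of_drift hℓ (hV1 x) (hVdriftAc x hx)
        refine pow_le_pow_left' ?_ ℓ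
        calc act P V x ^ ((1 : ℝ) / ℓ) + ((c + 1 : ℕ) : ℝ≥0∞)
            = (act P V x ^ ((1 : ℝ) / ℓ) + 1) + c := by push_cast; ring
          _ ≤ _ := by gcongr) c hx
  refine ⟨fun x hx => ?_, fun x hx => ?_⟩
  · rw [retE_step P hA]
    have hle := hstep 0 x
    simp only [zero_add] at hle
    refine le_trans (add_le_add le_rfl ?_) (hle.trans ?_)
    · refine setLIntegral_mono' hA.compl fun y hy => ?_
      have := hoff 1 y hy
      simpa only [add_comm 1] using this
    · rw [Nat.cast_one]
      gcongr
      exact hVdriftA x hx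
  · have := hoff 0 x hx
    simp only [zero_add, Nat.cast_zero, add_zero] at this
    rwa [← ENNReal.rpow_natCast (V x ^ _), ← ENNReal.rpow_mul, one_div_mul_cancel hl,
      ENNReal.rpow_one] at this

/-- `V` may take the value `∞`, but `{V < ∞} ∪ A` leads `P`-almost surely into `{V < ∞}`, so
irreducibility forces `V < ∞` almost everywhere. -/
lemma measure_V_eq_top (P : Kernel X X) {ψ : Measure X} (hψ : IsIrreducibility P ψ)
    {A : Set X} (hA : InBPlus ψ A) {d : ℝ≥0∞} (hd : d < ⊤) {V : X → ℝ≥0∞} (hVm : Measurable V)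
    (hVdriftA : ∀ x ∈ A, act P V x ≤ d) (hVdriftAc : ∀ x ∉ A, act P V x ≤ V x) :
    ψ {x | V x = ⊤} = 0 := by
  have hN : MeasurableSet {x | V x = ⊤} := hVm (measurableSet_singleton ⊤)
  by_contra hne
  have hone : ∀ x, (x ∈ A ∨ V x ≠ ⊤) → ∀ᵐ y ∂(P x), V y < ⊤ := by
    intro x hx
    refine ae_lt_top hVm ?_
    by_cases hxA : x ∈ A
    · exact ((hVdriftA x hxA).trans_lt hd).ne
    · exact ((hVdriftAc x hxA).trans_lt (hx.resolve_left hxA).lt_top).ne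
  have hzero : ∀ n x, V x ≠ ⊤ → iterP P n x {x | V x = ⊤} = 0 := by
    intro n
    induction n with
    | zero => intro x hx; simp [iterP, hx]
    | succ n ih =>
      intro x hx
      rw [iterP, lintegral_eq_zero_iff (measurable_iterP P hN n)]
      filter_upwards [hone x (Or.inr hx)] with y hy using ih y hy.ne
  obtain ⟨a, ha⟩ := nonempty_of_measure_ne_zero hA.2.ne'
  refine (hψ.2.2 _ hN (pos_iff_ne_zero.2 hne) a).ne' (ENNReal.tsum_eq_zero.2 fun n => ?_)
  rw [iterP, lintegral_eq_zero_iff (measurable_iterP P hN n)]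
  filter_upwards [hone a (Or.inl ha)] with y hy using hzero n y hy.ne

/-! ### Covering the state space by uniformly transient sets -/

theorem algTransient_of_two_drifts
    {X : Type*} [MeasurableSpace X] [MeasurableSpace.CountablyGenerated X]
    (P : Kernel X X) (hP : ∀ x, P x Set.univ ≤ 1) (ψ : Measure X)
    (hψ : IsMaxIrreducibility P ψ) (ℓ : ℕ) (hℓ : 1 ≤ ℓ) (A : Set X) (hA : InBPlus ψ A)
    (d : ℝ≥0∞) (hd0 : 0 < d) (hdtop : d < ⊤) (b : ℝ≥0∞) (hb0 : 0 < b) (hb1 : b < 1)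
    (V W : X → ℝ≥0∞) (hVm : Measurable V) (hWm : Measurable W)
    (hV1 : ∀ x, 1 ≤ V x) (hWA : ∀ x ∈ A, 1 ≤ W x) (hWAc : ∀ x ∉ A, W x ≤ 1)
    (hVdriftA : ∀ x ∈ A, act P V x ≤ d)
    (hVdriftAc : ∀ x ∉ A, act P V x + (ℓ : ℝ≥0∞) * V x ^ ((1 : ℝ) - 1 / ℓ) ≤ V x)
    (hWdriftA : ∀ x ∈ A, act P W x ≤ b)
    (hWdriftAc : ∀ x ∉ A, act P W x ≤ W x) :
    AlgTransient P ψ ℓ := by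
  obtain ⟨hAm, hApos⟩ := hA
  obtain ⟨hLA, hLAc⟩ := retE_one_le_of_drift P hAm hWA hWdriftA hWdriftAc
  obtain ⟨hRA, hRAc⟩ := retE_pow_le_of_drift P hP hAm hℓ hVm hV1 hVdriftA hVdriftAc
  set M := (d ^ ((1 : ℝ) / ℓ) + 1) ^ ℓ with hMdef
  have hM : M ≠ ⊤ := by
    have : d ^ ((1 : ℝ) / ℓ) ≠ ⊤ := ENNReal.rpow_ne_top_of_nonneg (by positivity) hdtop.ne
    finiteness
  obtain ⟨s, β, hs, hβ, hG⟩ := exists_green_bound P hAm ℓ hb1 hM hLA hRA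
  have hL1 : ∀ x, retE P A (fun _ => 1) x ≤ 1 := fun x => by
    by_cases hx : x ∈ A
    · exact (hLA x hx).trans hb1.le
    · exact (hLAc x hx).trans (hWAc x hx)
  have hbound : ∀ j : ℕ, ∀ x, (x ∈ A ∨ V x ≤ j) →
      ∑' n, ((n + 1 : ℕ) : ℝ≥0∞) ^ ℓ * iterP P (n + 1) x A ≤ s * (M + j) + β * 1 := by
    intro j x hx
    refine (hG x).trans ?_
    gcongr
    · by_cases hxA : x ∈ A
      · exact (hRA x hxA).trans le_self_add
      · exact ((hRAc x hxA).trans (hx.resolve_left hxA)).trans le_add_self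
    · exact hL1 x
  have hUA : UnifAlgTransientSet P ℓ A :=
    (iSup₂_le fun x hx => hbound 0 x (Or.inl hx)).trans_lt (by finiteness)
  let B : ℕ → ℕ → Set X := fun k j =>
    (A ∪ {x | V x ≤ j}) ∩ {x | ((j : ℝ≥0∞) + 1)⁻¹ ≤ iterP P (k + 1) x A}
  have hBm : ∀ k j, MeasurableSet (B k j) := fun k j =>
    (hAm.union (hVm measurableSet_Iic)).inter (measurable_iterP P hAm (k + 1) measurableSet_Ici)
  have hUB : ∀ k j, UnifAlgTransientSet P ℓ (B k j) := by
    intro k j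
    refine (iSup₂_le (a := ((j : ℝ≥0∞) + 1) * (s * (M + j) + β * 1)) fun x hx => ?_).trans_lt
      (by finiteness)
    have hj : ((j : ℝ≥0∞) + 1) * ((j : ℝ≥0∞) + 1)⁻¹ = 1 :=
      ENNReal.mul_inv_cancel (by simp) (by finiteness)
    calc ∑' n, ((n + 1 : ℕ) : ℝ≥0∞) ^ ℓ * iterP P (n + 1) x (B k j)
        = ((j : ℝ≥0∞) + 1) * ∑' n, ((n + 1 : ℕ) : ℝ≥0∞) ^ ℓ *
            (((j : ℝ≥0∞) + 1)⁻¹ * iterP P (n + 1) x (B k j)) := by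
          rw [← ENNReal.tsum_mul_left]
          refine tsum_congr fun n => ?_
          rw [mul_left_comm, ← mul_assoc ((j : ℝ≥0∞) + 1), hj, one_mul]
      _ ≤ ((j : ℝ≥0∞) + 1) * ∑' n, ((n + (k + 1) + 1 : ℕ) : ℝ≥0∞) ^ ℓ *
            iterP P (n + (k + 1) + 1) x A := by
          gcongr with n
          · omega
          · have := mul_iterP_le P (hBm k j) (A := A) (k := k + 1) (fun y hy => hy.2) (n + 1) x
            rwa [show n + 1 + (k + 1) = n + (k + 1) + 1 by ring] at this
      _ ≤ ((j : ℝ≥0∞) + 1) * ∑' n, ((n + 1 : ℕ) : ℝ≥0∞) ^ ℓ * iterP P (n + 1) x A := by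
          refine mul_le_mul' le_rfl ?_
          exact ENNReal.tsum_comp_le_tsum_of_injective (add_left_injective (k + 1))
            (fun n => ((n + 1 : ℕ) : ℝ≥0∞) ^ ℓ * iterP P (n + 1) x A)
      _ ≤ _ := by
          gcongr
          exact hbound j x hx.1
  have hcover : ∀ x, V x ≠ ⊤ → ∃ k j, x ∈ B k j := by
    intro x hx
    obtain ⟨k, hk⟩ : ∃ k, iterP P (k + 1) x A ≠ 0 := by
      by_contra! h0
      exact (hψ.1.2.2 A hAm hApos x).ne' (ENNReal.tsum_eq_zero.2 h0)
    obtain ⟨i, hi⟩ := ENNReal.exists_nat_gt hx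
    obtain ⟨m, hm⟩ := ENNReal.exists_inv_nat_lt hk
    refine ⟨k, max i m, Or.inr (hi.le.trans (by simp)), le_trans ?_ hm.le⟩
    rw [ENNReal.inv_le_inv]
    refine le_trans ?_ le_self_add
    simp
  -- Null members of the family are replaced by `A` and put into the exceptional set.
  let B' : ℕ → Set X := fun i =>
    if 0 < ψ (B i.unpair.1 i.unpair.2) then B i.unpair.1 i.unpair.2 else A
  refine ⟨hψ, (⋃ i, B' i)ᶜ, B', ?_, Set.compl_union_self _, fun i => ?_⟩
  · have hsub : (⋃ i, B' i)ᶜ ⊆ {x | V x = ⊤} ∪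
        ⋃ i : ℕ, if 0 < ψ (B i.unpair.1 i.unpair.2) then ∅ else B i.unpair.1 i.unpair.2 := by
      intro x hx
      by_contra hcon
      rw [Set.mem_union, not_or] at hcon
      obtain ⟨k, j, hkj⟩ := hcover x hcon.1
      by_cases hpos : 0 < ψ (B k j)
      · refine hx (Set.mem_iUnion.2 ⟨Nat.pair k j, ?_⟩)
        simpa [B', hpos] using hkj
      · refine hcon.2 (Set.mem_iUnion.2 ⟨Nat.pair k j, ?_⟩)
        simpa [hpos] using hkj
    refine measure_mono_null hsub (measure_union_null ?_ (measure_iUnion_null fun i => ?_))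
    · exact measure_V_eq_top P hψ.1 ⟨hAm, hApos⟩ hdtop hVm hVdriftA
        fun x hx => le_self_add.trans (hVdriftAc x hx)
    · split_ifs with hpos
      · exact measure_empty
      · simpa using hpos
  · by_cases hpos : 0 < ψ (B i.unpair.1 i.unpair.2)
    · simp only [B', if_pos hpos]
      exact ⟨⟨hBm _ _, hpos⟩, hUB _ _⟩
    · simp only [B', if_neg hpos]
      exact ⟨⟨hAm, hApos⟩, hUA⟩

end MarkovTransience
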